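/- Let G be an edge-colored graph with d^c(v) ≥ k for every vertex v, let t be the maximum length of a rainbow path in G, and let CL = u_0 u_1 … u_t u_0 be a rainbow cycle of length t+1 in G with t+1 ≤ ⌈3k/5⌉. Then for each i, the number of vertices z of G not on CL with (u_i, z) ∈ E(G) is at least ⌊2k/5⌋. -/

import Mathlib

/-!
The incident edges at a vertex `v` are parametrised by its neighbours, so `v` has at least `k`
neighbours. The rainbow cycle has only `t + 1 ≤ ⌈3k/5⌉` vertices, hence at least
`k - ⌈3k/5⌉ = ⌊2k/5⌋` neighbours of any vertex lie off the cycle.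
-/

open SimpleGraph

/-- The color degree of a vertex `v`: the number of distinct colors appearing on
edges incident to `v`. -/
noncomputable def colorDegree {V : Type*} (G : SimpleGraph V) (c : Sym2 V → ℕ) (v : V) : ℕ :=
  (c '' G.incidenceSet v).ncard

/-- A rainbow path: a path all of whose edges have pairwise distinct colors. -/
def IsRainbowPath {V : Type*} (G : SimpleGraph V) (c : Sym2 V → ℕ) {u v : V}
    (p : G.Walk u v) : Prop :=
  p.IsPath ∧ (p.edges.map c).Nodup

/-- A rainbow cycle: a cycle all of whose edges have pairwise distinct colors. -/
def IsRainbowCycle {V : Type*} (G : SimpleGraph V) (c : Sym2 V → ℕ) {u : V}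
    (p : G.Walk u u) : Prop :=
  p.IsCycle ∧ (p.edges.map c).Nodup

lemma colorDegree_le_ncard_neighborSet {V : Type*} [Fintype V] (G : SimpleGraph V)
    (c : Sym2 V → ℕ) (v : V) : colorDegree G c v ≤ (G.neighborSet v).ncard := by
  have hsub : c '' G.incidenceSet v ⊆ (fun z => c s(v, z)) '' G.neighborSet v := by
    rintro _ ⟨e, ⟨he, hv⟩, rfl⟩
    obtain ⟨z, rfl⟩ := hv
    exact ⟨z, he, rfl⟩
  exact (Set.ncard_le_ncard hsub (Set.toFinite _)).trans (Set.ncard_image_le (Set.toFinite _))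

/-- The base point of a nonempty closed walk is listed twice in the support, so the walk visits
at most `length` vertices. -/
lemma ncard_support_le_length {V : Type*} {G : SimpleGraph V} {u : V} (p : G.Walk u u)
    (hp : ¬ p.Nil) : {z | z ∈ p.support}.ncard ≤ p.length := by
  classical
  have hsub : {z | z ∈ p.support} ⊆ (p.support.tail.toFinset : Set V) := by
    intro z hz
    rw [Set.mem_ofPred_eq, Walk.mem_support_iff] at hz
    rcases hz with rfl | hz
    · simpa using Walk.end_mem_tail_support hp
    · simpa using hz
  calc {z | z ∈ p.support}.ncard ≤ (p.support.tail.toFinset : Set V).ncard :=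
        Set.ncard_le_ncard hsub (Finset.finite_toSet _)
    _ = p.support.tail.toFinset.card := Set.ncard_coe_finset _
    _ ≤ p.support.tail.length := List.toFinset_card_le _
    _ = p.length := by simp

theorem many_neighbors_outside_cycle {V : Type*} [Fintype V]
    (G : SimpleGraph V) (c : Sym2 V → ℕ) (k t : ℕ)
    (hdeg : ∀ v : V, k ≤ colorDegree G c v)
    (hex : ∃ (a b : V) (p : G.Walk a b), IsRainbowPath G c p ∧ p.length = t)
    (hmax : ∀ (a b : V) (p : G.Walk a b), IsRainbowPath G c p → p.length ≤ t)
    {u : V} (cyc : G.Walk u u) (hcyc : IsRainbowCycle G c cyc)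
    (hclen : cyc.length = t + 1) (hshort : t + 1 ≤ ⌈(3 * (k : ℚ)) / 5⌉₊) :
    ∀ i ≤ t, (2 * k) / 5 ≤
      ({z : V | z ∉ cyc.support ∧ G.Adj (cyc.getVert i) z}).ncard := by
  intro i _
  set v := cyc.getVert i
  have hnb := (hdeg v).trans (colorDegree_le_ncard_neighborSet G c v)
  have hsub : G.neighborSet v ⊆
      {z : V | z ∉ cyc.support ∧ G.Adj v z} ∪ {z | z ∈ cyc.support} := by
    intro z hz
    by_cases h : z ∈ cyc.support
    · exact Or.inr h
    · exact Or.inl ⟨h, hz⟩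
  have hcard := (Set.ncard_le_ncard hsub (Set.toFinite _)).trans (Set.ncard_union_le _ _)
  have hsupp := ncard_support_le_length cyc hcyc.1.not_nil
  have hceil : ⌈(3 * (k : ℚ)) / 5⌉₊ ≤ k - 2 * k / 5 := by
    rw [Nat.ceil_le, div_le_iff₀ (by norm_num)]
    have : 3 * k ≤ (k - 2 * k / 5) * 5 := by omega
    exact_mod_cast this
  omega
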